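/- arXiv:1010.0086 — 2 statements merged into one kernel-verified Lean document; each statement's English description precedes it below -/
import Mathlib

section
/- For every Lusztig datum a ∈ ℬ and every 1 ≤ i ≤ n, M_{[i+1,n+1]}(a) = −Σ_{t=i+1}^{n+1} Σ_{s=1}^{i} a_{s,t} = −m_i(a). (In particular, the weight of the collection M(a), namely the tuple (M_{[i+1,n+1]}(a))_{i}, coincides with wt(a) = (−m_i(a))_{i}.) -/
/-- The set of Lusztig data: `a : Π → ℤ_{≥0}`, modeled as an integer-valued function on
`ℤ × ℤ` that is nonnegative everywhere and vanishes off `Π = {(k,l) : 1 ≤ k < l ≤ n+1}`. -/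
def IsLusztig (n : ℕ) (a : ℤ → ℤ → ℤ) : Prop :=
  (∀ k l : ℤ, 0 ≤ a k l) ∧ ∀ k l : ℤ, ¬(1 ≤ k ∧ k < l ∧ l ≤ (n : ℤ) + 1) → a k l = 0

/-- The `p`-th smallest element (1-indexed) `k_p` of a Maya diagram `K`. -/
def kth (K : Finset ℕ) (p : ℕ) : ℕ := (K.sort (· ≤ ·)).getD (p - 1) 0

/-- `C = (c_{p,q})_{1 ≤ p ≤ q ≤ l}` (with `l = |K|`) is a `K`-tableau: an upper-triangular
integer matrix with `c_{p,p} = k_p`, `c_{p,q} ≤ c_{p,q+1}` and `c_{p,q} < c_{p+1,q}`. -/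
def IsKTab (K : Finset ℕ) (c : ℕ → ℕ → ℤ) : Prop :=
  (∀ p : ℕ, 1 ≤ p → p ≤ K.card → c p p = (kth K p : ℤ)) ∧
  (∀ p q : ℕ, 1 ≤ p → p ≤ q → q + 1 ≤ K.card → c p q ≤ c p (q + 1)) ∧
  (∀ p q : ℕ, 1 ≤ p → p + 1 ≤ q → q ≤ K.card → c p q < c (p + 1) q)

/-- `Σ_{1 ≤ p < q ≤ l} a_{c_{p,q}, c_{p,q}+(q−p)}`. -/
def tabSum (a : ℤ → ℤ → ℤ) (K : Finset ℕ) (c : ℕ → ℕ → ℤ) : ℤ :=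
  ∑ p ∈ Finset.Icc 1 K.card, ∑ q ∈ Finset.Icc (p + 1) K.card,
    a (c p q) (c p q + ((q : ℤ) - (p : ℤ)))

/-- `M_K(a) = −Σ_{j=1}^{l} Σ_{i=1}^{k_j−1} a_{i,k_j} + min{ tabSum over K-tableaux }`,
for `K ∈ M_n^×`, with the conventions `M_∅(a) = M_{[1,n+1]}(a) = 0`. -/
noncomputable def MK (n : ℕ) (a : ℤ → ℤ → ℤ) (K : Finset ℕ) : ℤ :=
  if K = ∅ ∨ K = Finset.Icc 1 (n + 1) then 0
  else
    -(∑ k ∈ K, ∑ s ∈ Finset.Icc 1 (k - 1), a (s : ℤ) (k : ℤ)) +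
      sInf {z : ℤ | ∃ c : ℕ → ℕ → ℤ, IsKTab K c ∧ z = tabSum a K c}

/-!
The entries of any `K`-tableau satisfy `k_p ≤ c_{p,q} ≤ k_q - (q - p)`: move along the row from
`c_{p,p}` for the lower bound and down the column to `c_{q,q}` for the upper bound. When `K` is an
interval both bounds equal `k_p`, so there is exactly one `K`-tableau, and its sum consists of the
`a_{s,t}` with `s < t` both in `K`. Adding it to `-∑_{t ∈ K} ∑_{s < t} a_{s,t}` leaves only the
terms with `s` below the interval.
-/

open Finset

section Sum

variable {M : Type*} [AddCommMonoid M]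

theorem sum_Icc_sub_add_left {i m k : ℕ} (hk : 1 ≤ k) (f : ℕ → M) :
    ∑ p ∈ Icc k (m - i), f (i + p) = ∑ s ∈ Icc (i + k) m, f s := by
  have image_add_left : (Icc k (m - i)).image (i + ·) = Icc (i + k) m := by
    ext s
    simp only [mem_image, mem_Icc]
    exact ⟨by rintro ⟨p, hp, rfl⟩; omega, fun hs => ⟨s - i, by omega, by omega⟩⟩
  rw [← image_add_left, sum_image (add_right_injective i).injOn]

theorem sum_Icc_sum_Icc_one_eq_add (i m : ℕ) (f : ℕ → ℕ → M) :
    ∑ t ∈ Icc (i + 1) m, ∑ s ∈ Icc 1 (t - 1), f s t =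
      ∑ t ∈ Icc (i + 1) m, ∑ s ∈ Icc 1 i, f s t +
        ∑ t ∈ Icc (i + 1) m, ∑ s ∈ Icc (i + 1) (t - 1), f s t := by
  rw [← sum_add_distrib]
  refine sum_congr rfl fun t ht => ?_
  have hit : i ≤ t - 1 := Nat.le_sub_one_of_lt (mem_Icc.1 ht).1
  have Icc_one (b : ℕ) : Icc 1 b = Ioc 0 b := Icc_add_one_left_eq_Ioc 0 b
  rw [Icc_one, Icc_one, Icc_add_one_left_eq_Ioc]
  exact (sum_Ioc_consecutive (f · t) i.zero_le hit).symm

end Sum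

theorem sort_Icc_eq_range' (a b : ℕ) : (Icc a b).sort (· ≤ ·) = List.range' a (b + 1 - a) := by
  have toFinset_range' : Icc a b = (List.range' a (b + 1 - a)).toFinset := by
    ext x
    simp only [mem_Icc, List.mem_toFinset, List.mem_range'_1]
    omega
  rw [toFinset_range', List.toFinset_sort _ List.nodup_range']
  exact List.pairwise_le_range'

namespace IsKTab

variable {K : Finset ℕ} {c : ℕ → ℕ → ℤ} {p q : ℕ}

theorem kth_le (hc : IsKTab K c) (hp : 1 ≤ p) (hpq : p ≤ q) (hq : q ≤ #K) :
    (kth K p : ℤ) ≤ c p q := by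
  obtain ⟨diag, row, -⟩ := hc
  induction q, hpq using Nat.le_induction with
  | base => exact (diag p hp hq).ge
  | succ q hpq ih => exact (ih (by omega)).trans (row p q hp hpq hq)

theorem add_sub_le_kth (hc : IsKTab K c) (hp : 1 ≤ p) (hpq : p ≤ q) (hq : q ≤ #K) :
    c p q + ((q : ℤ) - p) ≤ kth K q := by
  obtain ⟨diag, -, col⟩ := hc
  induction hpq using Nat.decreasingInduction with
  | self => simp [diag q hp hq]
  | of_succ p hpq ih =>
    have below := ih (by omega)
    have step := col p q hp hpq hq
    push_cast at below
    omega

end IsKTab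

theorem kth_Icc {a b p : ℕ} (hp : 1 ≤ p) (hpb : p ≤ #(Icc a b)) :
    kth (Icc a b) p = a + (p - 1) := by
  rw [Nat.card_Icc] at hpb
  rw [kth, sort_Icc_eq_range', List.getD_eq_getElem _ _ (by rw [List.length_range']; omega),
    List.getElem_range', one_mul]

section Interval

variable {i m : ℕ}

theorem IsKTab.eq_add_of_Icc {c : ℕ → ℕ → ℤ} (hc : IsKTab (Icc (i + 1) m) c) {p q : ℕ}
    (hp : 1 ≤ p) (hpq : p ≤ q) (hq : q ≤ #(Icc (i + 1) m)) : c p q = i + p := by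
  have lower := hc.kth_le hp hpq hq
  have upper := hc.add_sub_le_kth hp hpq hq
  rw [kth_Icc hp (hpq.trans hq)] at lower
  rw [kth_Icc (hp.trans hpq) hq] at upper
  omega

variable (i m)

theorem isKTab_Icc : IsKTab (Icc (i + 1) m) (fun p _ => i + p) := by
  refine ⟨fun p hp hpm => ?_, fun _ _ _ _ _ => le_rfl, fun _ _ _ _ _ => by simp⟩
  rw [kth_Icc hp hpm]
  dsimp only
  omega

variable {i m} (a : ℤ → ℤ → ℤ)

theorem tabSum_Icc {c : ℕ → ℕ → ℤ} (hc : IsKTab (Icc (i + 1) m) c) :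
    tabSum a (Icc (i + 1) m) c =
      ∑ t ∈ Icc (i + 1) m, ∑ s ∈ Icc (i + 1) (t - 1), a s t := by
  have card_eq : #(Icc (i + 1) m) = m - i := by simp
  calc tabSum a (Icc (i + 1) m) c
    _ = ∑ p ∈ Icc 1 (m - i), ∑ q ∈ Icc (p + 1) (m - i), a ↑(i + p) ↑(i + q) := by
      rw [tabSum, card_eq]
      refine sum_congr rfl fun p hp => sum_congr rfl fun q hq => ?_
      rw [mem_Icc] at hp hq
      rw [hc.eq_add_of_Icc hp.1 (by omega) (card_eq ▸ hq.2)]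
      push_cast
      congr 1
      ring
    _ = ∑ p ∈ Icc 1 (m - i), ∑ t ∈ Icc (i + p + 1) m, a ↑(i + p) t :=
      sum_congr rfl fun p _ => sum_Icc_sub_add_left p.succ_pos fun t => a ↑(i + p) t
    _ = ∑ s ∈ Icc (i + 1) m, ∑ t ∈ Icc (s + 1) m, a s t :=
      sum_Icc_sub_add_left le_rfl fun s => ∑ t ∈ Icc (s + 1) m, a s t
    _ = ∑ t ∈ Icc (i + 1) m, ∑ s ∈ Icc (i + 1) (t - 1), a s t :=
      sum_comm' fun s t => by simp only [mem_Icc]; omega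

variable (i m)

theorem setOf_tabSum_Icc :
    {z : ℤ | ∃ c : ℕ → ℕ → ℤ, IsKTab (Icc (i + 1) m) c ∧ z = tabSum a (Icc (i + 1) m) c} =
      {∑ t ∈ Icc (i + 1) m, ∑ s ∈ Icc (i + 1) (t - 1), a s t} := by
  refine Set.eq_singleton_iff_unique_mem.2 ⟨⟨_, isKTab_Icc i m, ?_⟩, ?_⟩
  · exact (tabSum_Icc a (isKTab_Icc i m)).symm
  · rintro _ ⟨c, hc, rfl⟩
    exact tabSum_Icc a hc

end Interval

theorem MK_Icc (n : ℕ) (a : ℤ → ℤ → ℤ) (i : ℕ) :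
    MK n a (Icc (i + 1) (n + 1)) = -∑ t ∈ Icc (i + 1) (n + 1), ∑ s ∈ Icc 1 i, a s t := by
  rw [MK]
  split_ifs with h
  · obtain h_empty | h_full := h
    · simp [h_empty]
    · have one_mem : 1 ∈ Icc (i + 1) (n + 1) := by simp [h_full]
      obtain rfl : i = 0 := by simpa using one_mem
      simp
  · rw [setOf_tabSum_Icc, csInf_singleton, sum_Icc_sum_Icc_one_eq_add]
    ring

theorem stmt11_general (n : ℕ) (a : ℤ → ℤ → ℤ) (i : ℕ) :
    MK n a (Icc (i + 1) (n + 1)) = -∑ t ∈ Icc (i + 1) (n + 1), ∑ s ∈ Icc 1 i, a s t ∧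
    MK n a (Icc (i + 1) (n + 1)) = -∑ k ∈ Icc 1 i, ∑ l ∈ Icc (i + 1) (n + 1), a k l :=
  ⟨MK_Icc n a i, by rw [MK_Icc, sum_comm]⟩

/-- for every Lusztig datum `a` and `1 ≤ i ≤ n`,
`M_{[i+1,n+1]}(a) = −Σ_{t=i+1}^{n+1} Σ_{s=1}^{i} a_{s,t} = −m_i(a)`, where
`m_i(a) = Σ_{k=1}^{i} Σ_{l=i+1}^{n+1} a_{k,l}`. -/
theorem stmt11 (n : ℕ) (hn : 1 ≤ n) (a : ℤ → ℤ → ℤ) (ha : IsLusztig n a)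
    (i : ℕ) (hi1 : 1 ≤ i) (hi2 : i ≤ n) :
    MK n a (Finset.Icc (i + 1) (n + 1)) =
      -(∑ t ∈ Finset.Icc (i + 1) (n + 1), ∑ s ∈ Finset.Icc 1 i, a (s : ℤ) (t : ℤ)) ∧
    MK n a (Finset.Icc (i + 1) (n + 1)) =
      -(∑ k ∈ Finset.Icc 1 i, ∑ l ∈ Finset.Icc (i + 1) (n + 1), a (k : ℤ) (l : ℤ)) :=
  stmt11_general n a i
end

section
/- For every Lusztig datum a ∈ ℬ and every 1 ≤ i ≤ n, taking K = {i} ∪ [i+2,n+1] one has M_K(a) = −Σ_{s=1}^{i−1} a_{s,i} − Σ_{t=i+2}^{n+1} Σ_{s=1}^{i+1} a_{s,t} + min_{1 ≤ r ≤ n+1−i} { Σ_{q=i+1}^{i+r−1} a_{i,q} + Σ_{q=i+r+1}^{n+1} a_{i+1,q} }. -/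
/-!
In a `K`-tableau each row is weakly increasing from `k_p`, and `c_{p,q} - p` increases down each
column to `k_q - q`, so `k_p ≤ c_{p,q} ≤ k_q - (q - p)`. For `K = {i} ∪ [i+2, n+1]` these bounds
coincide in every row but the first, which is a step function from `i` to `i + 1`; the position `r`
of the step is the only freedom left, and the minimum over tableaux becomes the minimum over `r`.
The `r`-independent rows of the tableau sum cancel the terms `a_{s,t}` with `s ≥ i + 2` of the
linear part of `M_K`.
-/

open Finset

lemma sum_Icc_const_add {M : Type*} [AddCommMonoid M] (f : ℕ → M) (i x y : ℕ) :
    ∑ q ∈ Icc (i + x) (i + y), f q = ∑ q ∈ Icc x y, f (i + q) := by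
  rw [← map_add_left_Icc, sum_map]
  rfl

lemma sum_Icc_add_sum_Icc_add_one {M : Type*} [AddCommMonoid M] (f : ℕ → M) {x y z : ℕ}
    (hxy : x ≤ y + 1) (hyz : y ≤ z) :
    ∑ q ∈ Icc x y, f q + ∑ q ∈ Icc (y + 1) z, f q = ∑ q ∈ Icc x z, f q := by
  simp only [← Ico_add_one_right_eq_Icc]
  exact sum_Ico_consecutive f hxy (Nat.add_le_add_right hyz 1)

lemma untopD_min_eq_csInf {α : Type*} [ConditionallyCompleteLinearOrder α] {s : Finset α}
    (hs : s.Nonempty) (d : α) : s.min.untopD d = sInf (s : Set α) := by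
  rw [← coe_min' hs, WithTop.untopD_coe, hs.csInf_eq_min']

lemma csInf_image_const_add {α : Type*} [AddGroup α] [ConditionallyCompleteLattice α]
    [AddLeftMono α] (x : α) {s : Set α} (hs : s.Nonempty) (hbdd : BddBelow s) :
    sInf ((x + ·) '' s) = x + sInf s :=
  ((OrderIso.addLeft x).map_csInf' hs hbdd).symm

lemma exists_forall_eq_ite_of_monotoneOn {f : ℕ → ℤ} {x : ℤ} {m : ℕ} (hm : 1 ≤ m)
    (hf : MonotoneOn f (Set.Icc 1 m)) (hf_one : f 1 = x) (hf_le : ∀ q ∈ Set.Icc 1 m, f q ≤ x + 1) :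
    ∃ r ∈ Set.Icc 1 m, ∀ q ∈ Set.Icc 1 m, f q = if q ≤ r then x else x + 1 := by
  have hr : Nat.findGreatest (f · = x) m ∈ Set.Icc 1 m :=
    ⟨Nat.le_findGreatest hm hf_one, Nat.findGreatest_le m⟩
  have hfr : f (Nat.findGreatest (f · = x) m) = x :=
    Nat.findGreatest_spec (P := (f · = x)) hm hf_one
  refine ⟨_, hr, fun q hq ↦ ?_⟩
  have hxq : x ≤ f q := hf_one ▸ hf ⟨le_rfl, hm⟩ hq hq.1
  split_ifs with hqr
  · exact le_antisymm (hfr ▸ hf hq hr hqr) hxq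
  · have hne : f q ≠ x := Nat.findGreatest_is_greatest (not_le.mp hqr) hq.2
    exact le_antisymm (hf_le q hq) (Int.add_one_le_of_lt (lt_of_le_of_ne hxq hne.symm))

section Tableaux

variable {K : Finset ℕ} {c c' : ℕ → ℕ → ℤ} {p q : ℕ}

lemma kth_eq_of_strictMonoOn {f : ℕ → ℕ} (hf : StrictMonoOn f (Set.Icc 1 #K))
    (hfK : Set.MapsTo f (Set.Icc 1 #K) K) (hp : p ∈ Set.Icc 1 #K) : kth K p = f p := by
  have hmem (x : Fin #K) : x.val + 1 ∈ Set.Icc 1 #K := ⟨by omega, x.isLt⟩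
  have hfun : (fun x : Fin #K ↦ f (x + 1)) = K.orderEmbOfFin rfl :=
    orderEmbOfFin_unique rfl (fun x ↦ hfK (hmem x))
      fun x y hxy ↦ hf (hmem x) (hmem y) (Nat.add_lt_add_right hxy 1)
  have hlt : p - 1 < #K := by have := hp.1; have := hp.2; omega
  calc kth K p = K.orderEmbOfFin rfl ⟨p - 1, hlt⟩ := by
        rw [orderEmbOfFin_apply, kth, List.getD_eq_getElem _ _ (by rwa [length_sort])]
        rfl
    _ = f (p - 1 + 1) := (congrFun hfun ⟨p - 1, hlt⟩).symm
    _ = f p := by rw [Nat.sub_add_cancel hp.1]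

lemma IsKTab.monotoneOn_row (hc : IsKTab K c) (hp : 1 ≤ p) :
    MonotoneOn (c p) (Set.Icc p #K) :=
  monotoneOn_of_le_succ Set.ordConnected_Icc fun q _ hq hq' ↦ hc.2.1 p q hp hq.1 hq'.2

lemma IsKTab.monotoneOn_column_sub (hc : IsKTab K c) (hq : q ≤ #K) :
    MonotoneOn (fun p ↦ c p q - (p : ℤ)) (Set.Icc 1 q) :=
  monotoneOn_of_le_succ Set.ordConnected_Icc fun p _ hp hp' ↦ by
    have hlt : c p q < c (p + 1) q := hc.2.2 p q hp.1 hp'.2 hq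
    simp only [Nat.succ_eq_succ, Nat.succ_eq_add_one, Nat.cast_add, Nat.cast_one]
    omega

lemma IsKTab.kth_le_s12 (hc : IsKTab K c) (hp : 1 ≤ p) (hpq : p ≤ q) (hq : q ≤ #K) :
    (kth K p : ℤ) ≤ c p q := by
  rw [← hc.1 p hp (hpq.trans hq)]
  exact hc.monotoneOn_row hp ⟨le_rfl, hpq.trans hq⟩ ⟨hpq, hq⟩ hpq

lemma IsKTab.sub_le_kth_sub (hc : IsKTab K c) (hp : 1 ≤ p) (hpq : p ≤ q) (hq : q ≤ #K) :
    c p q - p ≤ (kth K q : ℤ) - q := by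
  rw [← hc.1 q (hp.trans hpq) hq]
  exact hc.monotoneOn_column_sub hq ⟨hp, hpq⟩ ⟨hp.trans hpq, le_rfl⟩ hpq

lemma tabSum_congr (a : ℤ → ℤ → ℤ)
    (h : ∀ p q, 1 ≤ p → p < q → q ≤ #K → c p q = c' p q) : tabSum a K c = tabSum a K c' := by
  refine sum_congr rfl fun p hp ↦ sum_congr rfl fun q hq ↦ ?_
  rw [mem_Icc] at hp hq
  rw [h p q hp.1 hq.1 hq.2]

end Tableaux

/-- The Maya diagram `{i} ∪ [i+2, n+1]`, parametrized by `k = n - i` so that its `k + 1` elements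
are indexed without truncated subtraction. -/
abbrev gapDiagram (i k : ℕ) : Finset ℕ := insert i (Icc (i + 2) (i + k + 1))

/-- The tableau with `p`-th row constantly `i + p`, except that the first row takes the value `i`
in the columns `q ≤ r`. For `1 ≤ r ≤ k + 1` these are all the `gapDiagram i k`-tableaux. -/
def stepTableau (i r p q : ℕ) : ℤ := if p = 1 ∧ q ≤ r then i else i + p

/-- The part of `tabSum` along `stepTableau i r` that does not depend on `r`, coming from the rows
`p ≥ 2`. -/
def lowerRowsSum (a : ℤ → ℤ → ℤ) (i k : ℕ) : ℤ :=
  ∑ p ∈ Icc 2 (k + 1), ∑ q ∈ Icc (p + 1) (k + 1), a ((i + p : ℕ) : ℤ) ((i + q : ℕ) : ℤ)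

/-- The contribution of the first row of `stepTableau i r` to `tabSum`, reindexed by the second
index of `a`. -/
def firstRowSum (a : ℤ → ℤ → ℤ) (i k r : ℕ) : ℤ :=
  (∑ q ∈ Icc (i + 1) (i + r - 1), a (i : ℤ) (q : ℤ)) +
    ∑ q ∈ Icc (i + r + 1) (i + k + 1), a ((i : ℤ) + 1) (q : ℤ)

section GapDiagram

variable (a : ℤ → ℤ → ℤ) (i k : ℕ) {r p q : ℕ} {c : ℕ → ℕ → ℤ}

lemma card_gapDiagram : #(gapDiagram i k) = k + 1 := by
  rw [card_insert_of_notMem (by simp), Nat.card_Icc]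
  omega

lemma gapDiagram_ne_Icc : gapDiagram i k ≠ Icc 1 (i + k + 1) := by
  intro h
  have hmem : i + 1 ∈ gapDiagram i k := by
    rw [h, mem_Icc]
    omega
  simp at hmem

lemma kth_gapDiagram (hp : p ∈ Set.Icc 1 (k + 1)) :
    kth (gapDiagram i k) p = if p = 1 then i else i + p := by
  rw [← card_gapDiagram i k] at hp
  refine kth_eq_of_strictMonoOn (f := fun p ↦ if p = 1 then i else i + p) ?_ ?_ hp <;>
    rw [card_gapDiagram]
  · intro x hx y hy hxy
    simp only [Set.mem_Icc] at hx hy ⊢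
    split_ifs <;> omega
  · intro x hx
    simp only [Set.mem_Icc, coe_insert, coe_Icc, Set.mem_insert_iff] at hx ⊢
    split_ifs <;> omega

lemma isKTab_stepTableau (hr : 1 ≤ r) : IsKTab (gapDiagram i k) (stepTableau i r) := by
  unfold IsKTab stepTableau
  rw [card_gapDiagram]
  refine ⟨fun p hp hpk ↦ ?_, fun p q _ _ _ ↦ ?_, fun p q _ _ _ ↦ ?_⟩
  · rw [kth_gapDiagram i k ⟨hp, hpk⟩]
    split_ifs <;> omega
  all_goals split_ifs <;> omega

variable {i k}

lemma IsKTab.gapDiagram_apply_of_two_le_row (hc : IsKTab (gapDiagram i k) c)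
    (hp : 2 ≤ p) (hpq : p ≤ q) (hq : q ≤ k + 1) : c p q = i + p := by
  have hq' : q ≤ #(gapDiagram i k) := by rwa [card_gapDiagram]
  have hlower := hc.kth_le_s12 (by omega) hpq hq'
  have hupper := hc.sub_le_kth_sub (by omega) hpq hq'
  rw [kth_gapDiagram i k ⟨by omega, by omega⟩, if_neg (by omega)] at hlower hupper
  omega

lemma IsKTab.exists_gapDiagram_first_row_eq_ite (hc : IsKTab (gapDiagram i k) c) :
    ∃ r ∈ Set.Icc 1 (k + 1), ∀ q ∈ Set.Icc 1 (k + 1),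
      c 1 q = if q ≤ r then (i : ℤ) else i + 1 := by
  have hcard := card_gapDiagram i k
  refine exists_forall_eq_ite_of_monotoneOn (by omega) (hcard ▸ hc.monotoneOn_row le_rfl) ?_ ?_
  · rw [hc.1 1 le_rfl (by omega), kth_gapDiagram i k ⟨le_rfl, by omega⟩, if_pos rfl]
  · intro q hq
    have hupper := hc.sub_le_kth_sub le_rfl hq.1 (hcard ▸ hq.2)
    rw [kth_gapDiagram i k hq] at hupper
    split_ifs at hupper <;> omega

lemma IsKTab.exists_eq_stepTableau (hc : IsKTab (gapDiagram i k) c) :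
    ∃ r ∈ Set.Icc 1 (k + 1), ∀ p q, 1 ≤ p → p ≤ q → q ≤ k + 1 → c p q = stepTableau i r p q := by
  obtain ⟨r, hr, hrow⟩ := hc.exists_gapDiagram_first_row_eq_ite
  refine ⟨r, hr, fun p q hp hpq hq ↦ ?_⟩
  rcases hp.eq_or_lt' with rfl | hp
  · simp [stepTableau, hrow q ⟨hpq, hq⟩]
  · rw [hc.gapDiagram_apply_of_two_le_row hp hpq hq, stepTableau, if_neg (by omega)]

lemma sum_first_row_stepTableau (hr : r ∈ Set.Icc 1 (k + 1)) :
    ∑ q ∈ Icc 2 (k + 1), a (stepTableau i r 1 q) (stepTableau i r 1 q + ((q : ℤ) - 1)) =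
      firstRowSum a i k r := by
  obtain ⟨s, rfl⟩ := Nat.exists_eq_add_of_le hr.1
  rw [← sum_Icc_add_sum_Icc_add_one _ (by omega : 2 ≤ 1 + s + 1) hr.2, firstRowSum]
  congr 1
  · rw [show i + (1 + s) - 1 = i + s by omega, sum_Icc_const_add _ i 1 s,
      sum_Icc_const_add _ 1 1 s]
    refine sum_congr rfl fun q hq ↦ ?_
    rw [mem_Icc] at hq
    rw [stepTableau, if_pos ⟨rfl, by omega⟩]
    congr 1
    omega
  · rw [add_assoc i, add_assoc i, sum_Icc_const_add]
    refine sum_congr rfl fun q hq ↦ ?_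
    rw [mem_Icc] at hq
    rw [stepTableau, if_neg (by omega)]
    congr 1
    omega

lemma sum_lower_rows_stepTableau (r : ℕ) :
    ∑ p ∈ Icc 2 (k + 1), ∑ q ∈ Icc (p + 1) (k + 1),
      a (stepTableau i r p q) (stepTableau i r p q + ((q : ℤ) - p)) = lowerRowsSum a i k := by
  refine sum_congr rfl fun p hp ↦ sum_congr rfl fun q _ ↦ ?_
  rw [mem_Icc] at hp
  rw [stepTableau, if_neg (by omega)]
  congr 1
  push_cast
  ring

lemma tabSum_stepTableau (hr : r ∈ Set.Icc 1 (k + 1)) :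
    tabSum a (gapDiagram i k) (stepTableau i r) = lowerRowsSum a i k + firstRowSum a i k r := by
  rw [tabSum, card_gapDiagram, ← insert_Icc_add_one_left_eq_Icc (by omega : 1 ≤ k + 1),
    sum_insert (by simp), add_comm]
  exact congrArg₂ _ (sum_lower_rows_stepTableau a r) (sum_first_row_stepTableau a hr)

variable (i k)

lemma setOf_tabSum_gapDiagram :
    {z | ∃ c, IsKTab (gapDiagram i k) c ∧ z = tabSum a (gapDiagram i k) c} =
      (lowerRowsSum a i k + ·) '' ((Icc 1 (k + 1)).image (firstRowSum a i k) : Finset ℤ) := by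
  rw [coe_image, coe_Icc, Set.image_image]
  ext z
  constructor
  · rintro ⟨c, hc, rfl⟩
    obtain ⟨r, hr, hcr⟩ := hc.exists_eq_stepTableau
    have hsum : tabSum a (gapDiagram i k) c = tabSum a (gapDiagram i k) (stepTableau i r) :=
      tabSum_congr a fun p q hp hpq hq ↦ hcr p q hp hpq.le (card_gapDiagram i k ▸ hq)
    exact ⟨r, hr, (hsum.trans (tabSum_stepTableau a hr)).symm⟩
  · rintro ⟨r, hr, rfl⟩
    exact ⟨_, isKTab_stepTableau i k hr.1, (tabSum_stepTableau a hr).symm⟩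

lemma sInf_tabSum_gapDiagram :
    sInf {z | ∃ c, IsKTab (gapDiagram i k) c ∧ z = tabSum a (gapDiagram i k) c} =
      lowerRowsSum a i k + ((Icc 1 (k + 1)).image (firstRowSum a i k)).min.untopD 0 := by
  have hne : ((Icc 1 (k + 1)).image (firstRowSum a i k)).Nonempty :=
    (nonempty_Icc.mpr (by omega)).image _
  rw [setOf_tabSum_gapDiagram, csInf_image_const_add _ hne.to_set (Finset.bddBelow _),
    untopD_min_eq_csInf hne]

lemma lowerRowsSum_eq_sum_columns :
    lowerRowsSum a i k =
      ∑ t ∈ Icc (i + 2) (i + k + 1), ∑ s ∈ Icc (i + 2) (t - 1), a (s : ℤ) (t : ℤ) := by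
  calc lowerRowsSum a i k
      = ∑ s ∈ Icc (i + 2) (i + k + 1), ∑ t ∈ Icc (s + 1) (i + k + 1), a (s : ℤ) (t : ℤ) := by
        simp only [lowerRowsSum, add_assoc i, sum_Icc_const_add]
    _ = _ := sum_comm' fun s t ↦ by simp only [mem_Icc]; omega

lemma sum_columns_gapDiagram :
    ∑ t ∈ gapDiagram i k, ∑ s ∈ Icc 1 (t - 1), a (s : ℤ) (t : ℤ) =
      ∑ s ∈ Icc 1 (i - 1), a (s : ℤ) (i : ℤ) +
        (∑ t ∈ Icc (i + 2) (i + k + 1), ∑ s ∈ Icc 1 (i + 1), a (s : ℤ) (t : ℤ) +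
          lowerRowsSum a i k) := by
  rw [sum_insert (by simp), lowerRowsSum_eq_sum_columns, ← sum_add_distrib]
  congr 1
  refine sum_congr rfl fun t ht ↦ ?_
  rw [mem_Icc] at ht
  exact (sum_Icc_add_sum_Icc_add_one _ (by omega) (by omega)).symm

end GapDiagram

theorem stmt12_general (n : ℕ) (a : ℤ → ℤ → ℤ) (i : ℕ) (hi : i ≤ n) :
    MK n a (insert i (Icc (i + 2) (n + 1))) =
      -(∑ s ∈ Icc 1 (i - 1), a (s : ℤ) (i : ℤ)) -
        (∑ t ∈ Icc (i + 2) (n + 1), ∑ s ∈ Icc 1 (i + 1), a (s : ℤ) (t : ℤ)) +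
        (((Icc 1 (n + 1 - i)).image fun r =>
            (∑ q ∈ Icc (i + 1) (i + r - 1), a (i : ℤ) (q : ℤ)) +
              ∑ q ∈ Icc (i + r + 1) (n + 1), a ((i : ℤ) + 1) (q : ℤ)).min).untopD 0 := by
  obtain ⟨k, rfl⟩ := Nat.exists_eq_add_of_le hi
  have hne : ¬(gapDiagram i k = ∅ ∨ gapDiagram i k = Icc 1 (i + k + 1)) :=
    not_or.mpr ⟨insert_ne_empty _ _, gapDiagram_ne_Icc i k⟩
  rw [MK, if_neg hne, sum_columns_gapDiagram, sInf_tabSum_gapDiagram,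
    show i + k + 1 - i = k + 1 by omega]
  unfold firstRowSum
  ring

/-- for every Lusztig datum `a` and `1 ≤ i ≤ n`, for
`K = {i} ∪ [i+2,n+1]` one has
`M_K(a) = −Σ_{s=1}^{i−1} a_{s,i} − Σ_{t=i+2}^{n+1} Σ_{s=1}^{i+1} a_{s,t}
  + min_{1 ≤ r ≤ n+1−i} { Σ_{q=i+1}^{i+r−1} a_{i,q} + Σ_{q=i+r+1}^{n+1} a_{i+1,q} }`. -/
theorem stmt12 (n : ℕ) (hn : 1 ≤ n) (a : ℤ → ℤ → ℤ) (ha : IsLusztig n a)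
    (i : ℕ) (hi1 : 1 ≤ i) (hi2 : i ≤ n) :
    MK n a (insert i (Finset.Icc (i + 2) (n + 1))) =
      -(∑ s ∈ Finset.Icc 1 (i - 1), a (s : ℤ) (i : ℤ)) -
        (∑ t ∈ Finset.Icc (i + 2) (n + 1), ∑ s ∈ Finset.Icc 1 (i + 1), a (s : ℤ) (t : ℤ)) +
        (((Finset.Icc 1 (n + 1 - i)).image fun r =>
            (∑ q ∈ Finset.Icc (i + 1) (i + r - 1), a (i : ℤ) (q : ℤ)) +
              ∑ q ∈ Finset.Icc (i + r + 1) (n + 1), a ((i : ℤ) + 1) (q : ℤ)).min).untopD 0 :=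
  stmt12_general n a i hi2
end
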